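/- Let q ≥ 2 be an even integer, let λ_i > 0 for i ∈ ℕ, and let {f_n^{(i)} : n, i ∈ ℕ} be a bi-indexed family of symmetric functions in L²(ℝ₊^q) such that: ⟨f_n^{(i)}, f_n^{(j)}⟩ → δ_{ij} λ_i for all i, j; ‖f_n^{(i)} ⌢_{q/2} f_n^{(i)} − f_n^{(i)}‖ → 0 for all i; ‖f_n^{(i)} ⌢_r f_n^{(i)}‖ → 0 for all i and all 1 ≤ r ≤ q−1 with r ≠ q/2; and ‖f_n^{(i)} ⌢_r f_n^{(j)}‖ → 0 for all i ≠ j and all 1 ≤ r ≤ q−1. Then for every integer m ≥ 2, every function χ : {1,…,m} → ℕ, and every tuple (r₁,…,r_{m−1}) ∈ E_m = B_m \ D_m, the scalar iterated contraction (⋯((f_n^{(χ(1))} ⌢_{r₁} f_n^{(χ(2))}) ⌢_{r₂} f_n^{(χ(3))})⋯) ⌢_{r_{m−1}} f_n^{(χ(m))} converges to 0 as n → ∞. -/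

import Mathlib

open MeasureTheory Filter Topology

noncomputable section

/-- The positive orthant `ℝ₊ⁿ` inside `ℝⁿ`. -/
def posOrthant (n : ℕ) : Set (Fin n → ℝ) := {x | ∀ i, 0 ≤ x i}

/-- Lebesgue measure restricted to the positive orthant; the measure underlying `L²(ℝ₊ⁿ)`. -/
def μpos (n : ℕ) : MeasureTheory.Measure (Fin n → ℝ) :=
  MeasureTheory.volume.restrict (posOrthant n)

/-- Total extension of a finite tuple, giving the junk value `0` out of range. -/
def pad {k : ℕ} (t : Fin k → ℝ) (i : ℕ) : ℝ := if h : i < k then t ⟨i, h⟩ else 0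

/-- The `L²` inner product `⟨f, g⟩ = ∫ f ⬝ conj g` over the positive orthant. -/
def L2inner (n : ℕ) (f g : (Fin n → ℝ) → ℂ) : ℂ :=
  ∫ x, f x * (starRingEnd ℂ) (g x) ∂(μpos n)

/-- The `L²` norm over the positive orthant. -/
def L2norm (n : ℕ) (f : (Fin n → ℝ) → ℂ) : ℝ :=
  Real.sqrt (∫ x, ‖f x‖ ^ 2 ∂(μpos n))

/-- The adjoint `f*(t₁,…,tₙ) = conj (f (tₙ,…,t₁))`. -/
def adjF (n : ℕ) (f : (Fin n → ℝ) → ℂ) : (Fin n → ℝ) → ℂ :=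
  fun t => (starRingEnd ℂ) (f fun i => t i.rev)

/-- `f` is symmetric when `f = f*` a.e. on the positive orthant. -/
def IsSymmFn (n : ℕ) (f : (Fin n → ℝ) → ℂ) : Prop :=
  ∀ᵐ t ∂(μpos n), f t = adjF n f t

/-- Reindexing a multivariate function along an equality of dimensions. -/
def reindex {a b : ℕ} (h : a = b) (F : (Fin a → ℝ) → ℂ) : (Fin b → ℝ) → ℂ :=
  fun t => F fun j => t (Fin.cast h j)

/-- The integrand (in the `s`-variables) of the `p`-th arc contraction
`(f ⌢_p g)(t₁,…,t_{m+n-2p}) = ∫ f(t₁,…,t_{m-p},s_p,…,s₁) g(s₁,…,s_p,t_{m-p+1},…,t_{m+n-2p}) ds`. -/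
def arcKer (m n p : ℕ) (f : (Fin m → ℝ) → ℂ) (g : (Fin n → ℝ) → ℂ)
    (t : Fin (m + n - 2 * p) → ℝ) (s : Fin p → ℝ) : ℂ :=
  f (fun j => if (j : ℕ) < m - p then pad t j else pad s (m - 1 - (j : ℕ))) *
  g (fun j => if (j : ℕ) < p then pad s j else pad t (m + (j : ℕ) - 2 * p))

/-- The `p`-th arc contraction `f ⌢_p g`. -/
def arc (m n p : ℕ) (f : (Fin m → ℝ) → ℂ) (g : (Fin n → ℝ) → ℂ) :
    (Fin (m + n - 2 * p) → ℝ) → ℂ :=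
  fun t => ∫ s in posOrthant p, arcKer m n p f g t s

/-- The integrand of the star contraction of index `(p, p-1)`:
`(f ⋆_p^{p-1} g)(t₁,…,t_{m+n-2p+1})
  = ∫ f(t₁,…,t_{m-p},t_{m-p+1},s_{p-1},…,s₁) g(s₁,…,s_{p-1},t_{m-p+1},…,t_{m+n-2p+1}) ds`. -/
def starKer (m n p : ℕ) (f : (Fin m → ℝ) → ℂ) (g : (Fin n → ℝ) → ℂ)
    (t : Fin (m + n + 1 - 2 * p) → ℝ) (s : Fin (p - 1) → ℝ) : ℂ :=
  f (fun j => if (j : ℕ) < m - p + 1 then pad t j else pad s (m - 1 - (j : ℕ))) *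
  g (fun j => if (j : ℕ) < p - 1 then pad s j else pad t (m + (j : ℕ) + 1 - 2 * p))

/-- The star contraction `f ⋆_p^{p-1} g` of index `(p, p-1)`. -/
def starC (m n p : ℕ) (f : (Fin m → ℝ) → ℂ) (g : (Fin n → ℝ) → ℂ) :
    (Fin (m + n + 1 - 2 * p) → ℝ) → ℂ :=
  fun t => ∫ s in posOrthant (p - 1), starKer m n p f g t s

/-- The `q/2`-th arc contraction of two functions of `q` (even) variables,
expressed again as a function of `q` variables. -/
def contrHalf (q : ℕ) (f g : (Fin q → ℝ) → ℂ) : (Fin q → ℝ) → ℂ :=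
  fun t => ∫ s in posOrthant (q / 2),
    (f fun j => if (j : ℕ) < q - q / 2 then pad t j else pad s (q - 1 - (j : ℕ))) *
    (g fun j => if (j : ℕ) < q / 2 then pad s j else pad t (q + (j : ℕ) - 2 * (q / 2)))

/-- The full contraction `f ⌢_q g = ∫ f(t₁,…,t_q) g(t_q,…,t₁) dt` of two
functions of `q` variables. -/
def fullContr (q : ℕ) (f g : (Fin q → ℝ) → ℂ) : ℂ :=
  ∫ t in posOrthant q, f t * g fun i => t i.rev

/-- A `q`-dimensional square (cube): a product of `q` intervals of equal length. -/
def IsCube (q : ℕ) (S : Set (Fin q → ℝ)) : Prop :=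
  ∃ (a : Fin q → ℝ) (c : ℝ), S = Set.univ.pi fun i => Set.Icc (a i) (a i + c)

/-- One step of the left-bracketed iterated contraction, keeping track of the dimension. -/
def iterStep (q : ℕ) (acc : (d : ℕ) × ((Fin d → ℝ) → ℂ))
    (pr : ℕ × ((Fin q → ℝ) → ℂ)) : (d : ℕ) × ((Fin d → ℝ) → ℂ) :=
  ⟨acc.1 + q - 2 * pr.1, arc acc.1 q pr.1 acc.2 pr.2⟩

/-- The left-bracketed iterated contraction `(⋯((f₀ ⌢_{r₁} f₁) ⌢_{r₂} f₂)⋯) ⌢_{r_k} f_k`. -/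
def iterArc (q : ℕ) (f0 : (Fin q → ℝ) → ℂ) (l : List (ℕ × ((Fin q → ℝ) → ℂ))) :
    (d : ℕ) × ((Fin d → ℝ) → ℂ) :=
  l.foldl (iterStep q) ⟨q, f0⟩

/-- The value of a (`0`-dimensional, i.e. scalar) iterated contraction. -/
def scalarOf (x : (d : ℕ) × ((Fin d → ℝ) → ℂ)) : ℂ := x.2 fun _ => 0


/-- Membership in `A_m`: tuples `(r₁,…,r_{m-1}) ∈ {0,…,q}^{m-1}` (encoded as the values of
`r` at `1,…,m-1`) satisfying `r_p ≤ pq - 2(r₁+⋯+r_{p-1})` for `2 ≤ p ≤ m-1`. -/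
def memA (q m : ℕ) (r : ℕ → ℕ) : Prop :=
  (∀ p, 1 ≤ p → p ≤ m - 1 → r p ≤ q) ∧
  (∀ p, 2 ≤ p → p ≤ m - 1 → r p + 2 * ∑ k ∈ Finset.Icc 1 (p - 1), r k ≤ p * q)

/-- Membership in `B_m`: tuples of `A_m` with `2(r₁+⋯+r_{m-1}) = mq`. -/
def memB (q m : ℕ) (r : ℕ → ℕ) : Prop :=
  memA q m r ∧ 2 * ∑ k ∈ Finset.Icc 1 (m - 1), r k = m * q

/-- Membership in `D_m = B_m ∩ {0, q/2, q}^{m-1}`. -/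
def memD (q m : ℕ) (r : ℕ → ℕ) : Prop :=
  memB q m r ∧ ∀ p, 1 ≤ p → p ≤ m - 1 → (r p = 0 ∨ r p = q / 2 ∨ r p = q)

/-- Membership in `E_m = B_m \ D_m`. -/
def memE (q m : ℕ) (r : ℕ → ℕ) : Prop := memB q m r ∧ ¬ memD q m r

/-!
Arc contractions are compositions of square-integrable kernels, so `‖f ⌢_p g‖ ≤ ‖f‖ ‖g‖` and errors
`o(1)` in bounded families propagate through them. As long as all orders lie in `{0, q/2, q}`, the
iterated contraction is either already negligible or `cₙ f_{i₁} ⊗ ⋯ ⊗ f_{iₖ} + o(1)` with `cₙ`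
bounded: order `0` appends a tensor factor, order `q` replaces the last one by a scalar, and order
`q/2` reproduces it or, when the two indices differ, makes the whole contraction negligible. The
first contraction of any other order acts on the last tensor factor alone, hence is negligible, and
by the norm bound it remains so.
-/

open Asymptotics
open scoped ENNReal

section KernelComposition

variable {𝕜 X S Y : Type*} [RCLike 𝕜] [MeasurableSpace S] {σ : Measure S}

theorem enorm_integral_mul_le_eLpNorm_mul_eLpNorm {f g : S → 𝕜} (hf : AEStronglyMeasurable f σ)
    (hg : AEStronglyMeasurable g σ) :
    ‖∫ s, f s * g s ∂σ‖ₑ ≤ eLpNorm f 2 σ * eLpNorm g 2 σ :=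
  calc ‖∫ s, f s * g s ∂σ‖ₑ ≤ eLpNorm (f • g) 1 σ := by
        rw [eLpNorm_one_eq_lintegral_enorm]
        exact enorm_integral_le_lintegral_enorm _
    _ ≤ eLpNorm f 2 σ * eLpNorm g 2 σ := eLpNorm_smul_le_mul_eLpNorm hg hf

theorem eLpNorm_two_sq (f : S → 𝕜) : eLpNorm f 2 σ ^ 2 = ∫⁻ s, ‖f s‖ₑ ^ 2 ∂σ := by
  simpa using eLpNorm_nnreal_pow_eq_lintegral (f := f) (μ := σ) (p := 2) two_ne_zero

/-- Composition of integral kernels, `(x, y) ↦ ∫ F(x, s) G(s, y) ds`: an arc contraction, once the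
variables of its factors are grouped into free and contracted ones. -/
def kernelComp (σ : Measure S) (F : X × S → 𝕜) (G : S × Y → 𝕜) : X × Y → 𝕜 :=
  fun z => ∫ s, F (z.1, s) * G (s, z.2) ∂σ

theorem kernelComp_smul_left (c : 𝕜) (F : X × S → 𝕜) (G : S × Y → 𝕜) :
    kernelComp σ (c • F) G = c • kernelComp σ F G := by
  funext z
  simp only [kernelComp, Pi.smul_apply, smul_mul_assoc, integral_smul]

theorem kernelComp_smul_right (c : 𝕜) (F : X × S → 𝕜) (G : S × Y → 𝕜) :
    kernelComp σ F (c • G) = c • kernelComp σ F G := by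
  funext z
  simp only [kernelComp, Pi.smul_apply, mul_smul_comm, integral_smul]

variable [MeasurableSpace X] [MeasurableSpace Y] {μ : Measure X} {ν : Measure Y} [SFinite σ]

theorem eLpNorm_two_sq_prod {F : X × S → 𝕜} (hF : AEStronglyMeasurable F (μ.prod σ)) :
    eLpNorm F 2 (μ.prod σ) ^ 2 = ∫⁻ x, eLpNorm (fun s => F (x, s)) 2 σ ^ 2 ∂μ := by
  simp only [eLpNorm_two_sq]
  exact lintegral_prod _ (hF.enorm.pow_const 2)

theorem aemeasurable_eLpNorm_two_sq_prodMk_left {F : X × S → 𝕜}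
    (hF : AEStronglyMeasurable F (μ.prod σ)) :
    AEMeasurable (fun x => eLpNorm (fun s => F (x, s)) 2 σ ^ 2) μ := by
  simp only [eLpNorm_two_sq]
  exact (hF.enorm.pow_const 2).lintegral_prod_right'

theorem ae_memLp_two_prodMk_left {F : X × S → 𝕜} (hF : MemLp F 2 (μ.prod σ)) :
    ∀ᵐ x ∂μ, MemLp (fun s => F (x, s)) 2 σ := by
  have hfin : ∫⁻ x, eLpNorm (fun s => F (x, s)) 2 σ ^ 2 ∂μ ≠ ∞ := by
    rw [← eLpNorm_two_sq_prod hF.1]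
    exact ENNReal.pow_ne_top hF.2.ne
  filter_upwards [hF.1.prodMk_left,
    ae_lt_top' (aemeasurable_eLpNorm_two_sq_prodMk_left hF.1) hfin] with x hmeas hlt
  exact ⟨hmeas, by simpa using hlt⟩

variable [SFinite ν]

theorem kernelComp_congr_ae {F F' : X × S → 𝕜} {G G' : S × Y → 𝕜} (hF : F =ᵐ[μ.prod σ] F')
    (hG : G =ᵐ[σ.prod ν] G') : kernelComp σ F G =ᵐ[μ.prod ν] kernelComp σ F' G' := by
  have hG_slice : ∀ᵐ y ∂ν, ∀ᵐ s ∂σ, G (s, y) = G' (s, y) :=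
    Measure.ae_ae_of_ae_prod (Measure.measurePreserving_swap.quasiMeasurePreserving.ae hG)
  filter_upwards [Measure.quasiMeasurePreserving_fst.ae (Measure.ae_ae_of_ae_prod hF),
    Measure.quasiMeasurePreserving_snd.ae hG_slice] with z hFz hGz
  refine integral_congr_ae ?_
  filter_upwards [hFz, hGz] with s hFs hGs
  rw [hFs, hGs]

theorem eLpNorm_two_sq_prod_symm {G : S × Y → 𝕜} (hG : AEStronglyMeasurable G (σ.prod ν)) :
    eLpNorm G 2 (σ.prod ν) ^ 2 = ∫⁻ y, eLpNorm (fun s => G (s, y)) 2 σ ^ 2 ∂ν := by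
  simp only [eLpNorm_two_sq]
  exact lintegral_prod_symm _ (hG.enorm.pow_const 2)

theorem aemeasurable_eLpNorm_two_sq_prodMk_right {G : S × Y → 𝕜}
    (hG : AEStronglyMeasurable G (σ.prod ν)) :
    AEMeasurable (fun y => eLpNorm (fun s => G (s, y)) 2 σ ^ 2) ν := by
  simp only [eLpNorm_two_sq]
  exact (hG.enorm.pow_const 2).lintegral_prod_left'

theorem ae_memLp_two_prodMk_right {G : S × Y → 𝕜} (hG : MemLp G 2 (σ.prod ν)) :
    ∀ᵐ y ∂ν, MemLp (fun s => G (s, y)) 2 σ :=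
  ae_memLp_two_prodMk_left (F := G ∘ Prod.swap)
    (hG.comp_measurePreserving Measure.measurePreserving_swap)

theorem ae_memLp_two_slices {F : X × S → 𝕜} {G : S × Y → 𝕜} (hF : MemLp F 2 (μ.prod σ))
    (hG : MemLp G 2 (σ.prod ν)) :
    ∀ᵐ z ∂μ.prod ν, MemLp (fun s => F (z.1, s)) 2 σ ∧ MemLp (fun s => G (s, z.2)) 2 σ :=
  (Measure.quasiMeasurePreserving_fst.ae (ae_memLp_two_prodMk_left hF)).and
    (Measure.quasiMeasurePreserving_snd.ae (ae_memLp_two_prodMk_right hG))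

theorem eLpNorm_kernelComp_le {F : X × S → 𝕜} {G : S × Y → 𝕜} (hF : MemLp F 2 (μ.prod σ))
    (hG : MemLp G 2 (σ.prod ν)) :
    eLpNorm (kernelComp σ F G) 2 (μ.prod ν) ≤
      eLpNorm F 2 (μ.prod σ) * eLpNorm G 2 (σ.prod ν) := by
  rw [← ENNReal.pow_le_pow_left_iff two_ne_zero]
  calc eLpNorm (kernelComp σ F G) 2 (μ.prod ν) ^ 2
      = ∫⁻ z, ‖kernelComp σ F G z‖ₑ ^ 2 ∂μ.prod ν := eLpNorm_two_sq _
    _ ≤ ∫⁻ z, eLpNorm (fun s => F (z.1, s)) 2 σ ^ 2 *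
          eLpNorm (fun s => G (s, z.2)) 2 σ ^ 2 ∂μ.prod ν := by
        refine lintegral_mono_ae ?_
        filter_upwards [ae_memLp_two_slices hF hG] with z ⟨hFz, hGz⟩
        rw [← mul_pow]
        exact pow_le_pow_left' (enorm_integral_mul_le_eLpNorm_mul_eLpNorm hFz.1 hGz.1) 2
    _ = (eLpNorm F 2 (μ.prod σ) * eLpNorm G 2 (σ.prod ν)) ^ 2 := by
        rw [lintegral_prod_mul (aemeasurable_eLpNorm_two_sq_prodMk_left hF.1)
          (aemeasurable_eLpNorm_two_sq_prodMk_right hG.1), mul_pow,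
          eLpNorm_two_sq_prod hF.1, eLpNorm_two_sq_prod_symm hG.1]

theorem kernelComp_add_left {F F' : X × S → 𝕜} {G : S × Y → 𝕜} (hF : MemLp F 2 (μ.prod σ))
    (hF' : MemLp F' 2 (μ.prod σ)) (hG : MemLp G 2 (σ.prod ν)) :
    kernelComp σ (F + F') G =ᵐ[μ.prod ν] kernelComp σ F G + kernelComp σ F' G := by
  filter_upwards [ae_memLp_two_slices hF hG, ae_memLp_two_slices hF' hG]
    with z ⟨hFz, hGz⟩ ⟨hFz', _⟩
  simp only [kernelComp, Pi.add_apply, add_mul]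
  exact integral_add (hFz.integrable_mul hGz) (hFz'.integrable_mul hGz)

theorem kernelComp_add_right {F : X × S → 𝕜} {G G' : S × Y → 𝕜} (hF : MemLp F 2 (μ.prod σ))
    (hG : MemLp G 2 (σ.prod ν)) (hG' : MemLp G' 2 (σ.prod ν)) :
    kernelComp σ F (G + G') =ᵐ[μ.prod ν] kernelComp σ F G + kernelComp σ F G' := by
  filter_upwards [ae_memLp_two_slices hF hG, ae_memLp_two_slices hF hG']
    with z ⟨hFz, hGz⟩ ⟨_, hGz'⟩
  simp only [kernelComp, Pi.add_apply, mul_add]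
  exact integral_add (hFz.integrable_mul hGz) (hFz.integrable_mul hGz')

variable [SFinite μ]

theorem aestronglyMeasurable_kernelComp {F : X × S → 𝕜} {G : S × Y → 𝕜}
    (hF : AEStronglyMeasurable F (μ.prod σ)) (hG : AEStronglyMeasurable G (σ.prod ν)) :
    AEStronglyMeasurable (kernelComp σ F G) (μ.prod ν) := by
  have hleft : Measure.QuasiMeasurePreserving (fun w : (X × Y) × S => (w.1.1, w.2))
      ((μ.prod ν).prod σ) (μ.prod σ) :=
    QuasiMeasurePreserving.prodMap Measure.quasiMeasurePreserving_fst
      (Measure.QuasiMeasurePreserving.id σ)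
  have hright : Measure.QuasiMeasurePreserving (fun w : (X × Y) × S => (w.2, w.1.2))
      ((μ.prod ν).prod σ) (σ.prod ν) :=
    Measure.measurePreserving_swap.quasiMeasurePreserving.comp
      (QuasiMeasurePreserving.prodMap Measure.quasiMeasurePreserving_snd
        (Measure.QuasiMeasurePreserving.id σ))
  exact ((hF.comp_quasiMeasurePreserving hleft).mul
    (hG.comp_quasiMeasurePreserving hright)).integral_prod_right'

theorem memLp_kernelComp {F : X × S → 𝕜} {G : S × Y → 𝕜} (hF : MemLp F 2 (μ.prod σ))
    (hG : MemLp G 2 (σ.prod ν)) : MemLp (kernelComp σ F G) 2 (μ.prod ν) :=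
  ⟨aestronglyMeasurable_kernelComp hF.1 hG.1,
    (eLpNorm_kernelComp_le hF hG).trans_lt (ENNReal.mul_lt_top hF.2 hG.2)⟩

/-- Composition of square-integrable kernels as a bilinear map of `L²` spaces. -/
def kernelCompₗ (𝕜 : Type*) [RCLike 𝕜] (μ : Measure X) (σ : Measure S) (ν : Measure Y)
    [SFinite μ] [SFinite σ] [SFinite ν] :
    Lp 𝕜 2 (μ.prod σ) →ₗ[𝕜] Lp 𝕜 2 (σ.prod ν) →ₗ[𝕜] Lp 𝕜 2 (μ.prod ν) :=
  LinearMap.mk₂ 𝕜 (fun F G => (memLp_kernelComp (Lp.memLp F) (Lp.memLp G)).toLp)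
    (fun F F' G => by
      rw [← MemLp.toLp_add]
      exact MemLp.toLp_congr _ _ ((kernelComp_congr_ae (Lp.coeFn_add F F') .rfl).trans
        (kernelComp_add_left (Lp.memLp F) (Lp.memLp F') (Lp.memLp G))))
    (fun c F G => by
      rw [← MemLp.toLp_const_smul]
      exact MemLp.toLp_congr _ _ ((kernelComp_congr_ae (Lp.coeFn_smul c F) .rfl).trans
        (kernelComp_smul_left c F G).eventuallyEq))
    (fun F G G' => by
      rw [← MemLp.toLp_add]
      exact MemLp.toLp_congr _ _ ((kernelComp_congr_ae .rfl (Lp.coeFn_add G G')).trans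
        (kernelComp_add_right (Lp.memLp F) (Lp.memLp G) (Lp.memLp G'))))
    (fun c F G => by
      rw [← MemLp.toLp_const_smul]
      exact MemLp.toLp_congr _ _ ((kernelComp_congr_ae .rfl (Lp.coeFn_smul c G)).trans
        (kernelComp_smul_right c F G).eventuallyEq))

theorem norm_kernelCompₗ_le (F : Lp 𝕜 2 (μ.prod σ)) (G : Lp 𝕜 2 (σ.prod ν)) :
    ‖kernelCompₗ 𝕜 μ σ ν F G‖ ≤ ‖F‖ * ‖G‖ := by
  rw [Lp.norm_def F, Lp.norm_def G, ← ENNReal.toReal_mul]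
  refine (Lp.norm_toLp _ (memLp_kernelComp (Lp.memLp F) (Lp.memLp G))).trans_le ?_
  exact ENNReal.toReal_mono (ENNReal.mul_ne_top (Lp.eLpNorm_ne_top F) (Lp.eLpNorm_ne_top G))
    (eLpNorm_kernelComp_le (Lp.memLp F) (Lp.memLp G))

theorem kernelCompₗ_toLp {F : X × S → 𝕜} {G : S × Y → 𝕜} (hF : MemLp F 2 (μ.prod σ))
    (hG : MemLp G 2 (σ.prod ν)) :
    kernelCompₗ 𝕜 μ σ ν hF.toLp hG.toLp = (memLp_kernelComp hF hG).toLp :=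
  MemLp.toLp_congr (memLp_kernelComp (Lp.memLp _) (Lp.memLp _)) _
    (kernelComp_congr_ae hF.coeFn_toLp hG.coeFn_toLp)

end KernelComposition

section Orthant

theorem μpos_eq_pi (d : ℕ) :
    μpos d = Measure.pi fun _ : Fin d => (volume : Measure ℝ).restrict (Set.Ici 0) := by
  have hset : posOrthant d = Set.univ.pi fun _ => Set.Ici 0 := by
    ext x
    simp [posOrthant, Pi.le_def]
  rw [μpos, hset, volume_pi, Measure.restrict_pi_pi]

instance instSigmaFiniteμpos (d : ℕ) : SigmaFinite (μpos d) :=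
  inferInstanceAs (SigmaFinite (volume.restrict (posOrthant d)))

variable {a b c d e k m n p q : ℕ}

/-- The pairing of two blocks of variables into one tuple, placed according to `ε`. -/
def glue (ε : Fin a ⊕ Fin b ≃ Fin c) : ((Fin a → ℝ) × (Fin b → ℝ)) ≃ᵐ (Fin c → ℝ) :=
  (MeasurableEquiv.sumPiEquivProdPi fun _ => ℝ).symm.trans
    (MeasurableEquiv.piCongrLeft (fun _ => ℝ) ε)

theorem glue_apply (ε : Fin a ⊕ Fin b ≃ Fin c) (z : (Fin a → ℝ) × (Fin b → ℝ))
    (i : Fin a ⊕ Fin b) : glue ε z (ε i) = Sum.elim z.1 z.2 i := by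
  rw [glue, MeasurableEquiv.trans_apply, MeasurableEquiv.piCongrLeft_apply_apply]
  cases i <;> rfl

theorem eq_glue_iff (ε : Fin a ⊕ Fin b ≃ Fin c) {t : Fin c → ℝ} {z : (Fin a → ℝ) × (Fin b → ℝ)} :
    t = glue ε z ↔ (∀ i, t (ε (.inl i)) = z.1 i) ∧ ∀ i, t (ε (.inr i)) = z.2 i := by
  rw [funext_iff, ε.surjective.forall, Sum.forall]
  simp only [glue_apply, Sum.elim_inl, Sum.elim_inr]

theorem measurePreserving_glue (ε : Fin a ⊕ Fin b ≃ Fin c) :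
    MeasurePreserving (glue ε) ((μpos a).prod (μpos b)) (μpos c) := by
  simp only [μpos_eq_pi]
  exact (measurePreserving_sumPiEquivProdPi_symm
      fun _ : Fin a ⊕ Fin b => (volume : Measure ℝ).restrict (Set.Ici 0)).trans
    (measurePreserving_piCongrLeft (fun _ : Fin c => (volume : Measure ℝ).restrict (Set.Ici 0)) ε)

/-- Concatenation of two blocks of indices. -/
def catEquiv (h : a + b = c) : Fin a ⊕ Fin b ≃ Fin c :=
  finSumFinEquiv.trans (finCongr h)

/-- Concatenation of two blocks of indices, the second one in reverse order: the order in which an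
arc contraction feeds the contracted variables to its first factor. -/
def catRevEquiv (h : a + b = c) : Fin a ⊕ Fin b ≃ Fin c :=
  ((Equiv.refl _).sumCongr Fin.revPerm).trans (catEquiv h)

@[simp] theorem val_catEquiv_inl (h : a + b = c) (i : Fin a) : (catEquiv h (.inl i) : ℕ) = i := by
  simp [catEquiv]

@[simp] theorem val_catEquiv_inr (h : a + b = c) (i : Fin b) :
    (catEquiv h (.inr i) : ℕ) = a + i := by
  simp [catEquiv]

@[simp] theorem val_catRevEquiv_inl (h : a + b = c) (i : Fin a) :
    (catRevEquiv h (.inl i) : ℕ) = i := by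
  simp [catRevEquiv]

@[simp] theorem val_catRevEquiv_inr (h : a + b = c) (i : Fin b) :
    (catRevEquiv h (.inr i) : ℕ) = a + (b - (i + 1)) := by
  simp [catRevEquiv]

theorem pad_of_val_eq (t : Fin c → ℝ) {k : ℕ} {i : Fin c} (h : i = k) : pad t k = t i := by
  subst h
  exact dif_pos i.2

theorem pad_glue_catEquiv_left (h : a + b = c) (z : (Fin a → ℝ) × (Fin b → ℝ)) (i : Fin a) :
    pad (glue (catEquiv h) z) i = z.1 i :=
  (pad_of_val_eq _ (val_catEquiv_inl h i)).trans (glue_apply _ z (.inl i))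

theorem pad_glue_catEquiv_right (h : a + b = c) (z : (Fin a → ℝ) × (Fin b → ℝ)) (i : Fin b) :
    pad (glue (catEquiv h) z) (a + i) = z.2 i :=
  (pad_of_val_eq _ (val_catEquiv_inr h i)).trans (glue_apply _ z (.inr i))

theorem reindex_arc_apply (h : m + n - 2 * p = d) (f : (Fin m → ℝ) → ℂ) (g : (Fin n → ℝ) → ℂ)
    (t : Fin d → ℝ) :
    reindex h (arc m n p f g) t =
      ∫ s, f (fun j => if (j : ℕ) < m - p then pad t j else pad s (m - 1 - j)) *
        g (fun j => if (j : ℕ) < p then pad s j else pad t (m + j - 2 * p)) ∂μpos p := by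
  subst h
  rfl

theorem reindex_arc_comp_glue (hm : a + p = m) (hn : p + b = n) (hd : a + b = d)
    (h : m + n - 2 * p = d) (f : (Fin m → ℝ) → ℂ) (g : (Fin n → ℝ) → ℂ) :
    reindex h (arc m n p f g) ∘ glue (catEquiv hd) =
      kernelComp (μpos p) (f ∘ glue (catRevEquiv hm)) (g ∘ glue (catEquiv hn)) := by
  funext z
  rw [Function.comp_apply, reindex_arc_apply]
  refine integral_congr_ae (.of_forall fun s => ?_)
  refine congrArg₂ (· * ·) (congrArg f ?_) (congrArg g ?_)
  · refine (eq_glue_iff _).2 ⟨fun i => ?_, fun i => ?_⟩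
    · rw [val_catRevEquiv_inl, if_pos (by omega), pad_glue_catEquiv_left]
    · rw [val_catRevEquiv_inr, if_neg (by omega)]
      exact pad_of_val_eq s (by omega)
  · refine (eq_glue_iff _).2 ⟨fun i => ?_, fun i => ?_⟩
    · rw [val_catEquiv_inl, if_pos i.2]
      exact pad_of_val_eq s rfl
    · rw [val_catEquiv_inr, if_neg (by omega), ← pad_glue_catEquiv_right hd z i]
      congr 1
      omega

/-- The complex Hilbert space `L²(ℝ₊ᵈ)`. -/
abbrev OrthantL2 (d : ℕ) : Type := Lp ℂ 2 (μpos d)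

/-- The arc contraction `F ⌢_p G` of `F ∈ L²(ℝ₊ᵐ)` and `G ∈ L²(ℝ₊ⁿ)`, as a bilinear map. The
numbers `a = m - p` and `b = n - p` of free variables are carried along so that no truncated
subtraction enters the dimensions. -/
def arcL2 (hm : a + p = m) (hn : p + b = n) (hd : a + b = d) :
    OrthantL2 m →ₗ[ℂ] OrthantL2 n →ₗ[ℂ] OrthantL2 d :=
  ((kernelCompₗ ℂ (μpos a) (μpos p) (μpos b)).compl₁₂
    (Lp.compMeasurePreservingₗ ℂ _ (measurePreserving_glue (catRevEquiv hm)))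
    (Lp.compMeasurePreservingₗ ℂ _ (measurePreserving_glue (catEquiv hn)))).compr₂
    (Lp.compMeasurePreservingₗ ℂ _ ((measurePreserving_glue (catEquiv hd)).symm))

theorem norm_arcL2_le (hm : a + p = m) (hn : p + b = n) (hd : a + b = d) (F : OrthantL2 m)
    (G : OrthantL2 n) : ‖arcL2 hm hn hd F G‖ ≤ ‖F‖ * ‖G‖ := by
  refine (Lp.norm_compMeasurePreserving _ _).trans_le ((norm_kernelCompₗ_le _ _).trans_eq ?_)
  exact congrArg₂ (· * ·) (Lp.norm_compMeasurePreserving _ _) (Lp.norm_compMeasurePreserving _ _)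

theorem reindex_arc_eq_kernelComp (hm : a + p = m) (hn : p + b = n) (hd : a + b = d)
    (h : m + n - 2 * p = d) (f : (Fin m → ℝ) → ℂ) (g : (Fin n → ℝ) → ℂ) :
    reindex h (arc m n p f g) =
      kernelComp (μpos p) (f ∘ glue (catRevEquiv hm)) (g ∘ glue (catEquiv hn)) ∘
        (glue (catEquiv hd)).symm := by
  rw [← reindex_arc_comp_glue hm hn hd h, Function.comp_assoc, MeasurableEquiv.self_comp_symm,
    Function.comp_id]

theorem memLp_reindex_arc (hm : a + p = m) (hn : p + b = n) (hd : a + b = d)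
    (h : m + n - 2 * p = d) {f : (Fin m → ℝ) → ℂ} {g : (Fin n → ℝ) → ℂ} (hf : MemLp f 2 (μpos m))
    (hg : MemLp g 2 (μpos n)) : MemLp (reindex h (arc m n p f g)) 2 (μpos d) := by
  rw [reindex_arc_eq_kernelComp hm hn hd h]
  exact (memLp_kernelComp (hf.comp_measurePreserving (measurePreserving_glue _))
    (hg.comp_measurePreserving (measurePreserving_glue _))).comp_measurePreserving
      (measurePreserving_glue _).symm

theorem arcL2_toLp (hm : a + p = m) (hn : p + b = n) (hd : a + b = d) (h : m + n - 2 * p = d)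
    {f : (Fin m → ℝ) → ℂ} {g : (Fin n → ℝ) → ℂ} (hf : MemLp f 2 (μpos m))
    (hg : MemLp g 2 (μpos n)) :
    arcL2 hm hn hd hf.toLp hg.toLp = (memLp_reindex_arc hm hn hd h hf hg).toLp := by
  have hF := hf.comp_measurePreserving (measurePreserving_glue (catRevEquiv hm))
  have hG := hg.comp_measurePreserving (measurePreserving_glue (catEquiv hn))
  calc arcL2 hm hn hd hf.toLp hg.toLp
      = Lp.compMeasurePreserving _ (measurePreserving_glue (catEquiv hd)).symm
          (kernelCompₗ ℂ _ _ _ hF.toLp hG.toLp) := rfl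
    _ = (memLp_reindex_arc hm hn hd h hf hg).toLp := by
      rw [kernelCompₗ_toLp, Lp.toLp_compMeasurePreserving]
      simp only [reindex_arc_eq_kernelComp hm hn hd h]

theorem μpos_zero : μpos 0 = Measure.dirac fun _ => 0 := by
  rw [μpos_eq_pi, Measure.pi_of_empty (x := fun _ => 0)]

theorem reindex_arc_zero_apply (h : m + n - 2 * 0 = d) (f : (Fin m → ℝ) → ℂ)
    (g : (Fin n → ℝ) → ℂ) (t : Fin d → ℝ) :
    reindex h (arc m n 0 f g) t = f (fun j => pad t j) * g fun j => pad t (m + j) := by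
  rw [reindex_arc_apply, μpos_zero, integral_dirac]
  simp

/-- The tensor product `F ⊗ G`, that is, the arc contraction of order `0`. -/
def tensorL2 (hd : m + n = d) : OrthantL2 m →ₗ[ℂ] OrthantL2 n →ₗ[ℂ] OrthantL2 d :=
  arcL2 (add_zero m) (zero_add n) hd

theorem reindex_arc_tensor (hc : m + q - 2 * 0 = c) (hd : c + n - 2 * p = d)
    (he : q + n - 2 * p = e) (hd' : m + e - 2 * 0 = d) (hpq : p ≤ q) (hpn : p ≤ n)
    (f : (Fin m → ℝ) → ℂ) (g : (Fin q → ℝ) → ℂ) (u : (Fin n → ℝ) → ℂ) :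
    reindex hd (arc c n p (reindex hc (arc m q 0 f g)) u) =
      reindex hd' (arc m e 0 f (reindex he (arc q n p g u))) := by
  funext t
  rw [reindex_arc_apply, reindex_arc_zero_apply, reindex_arc_apply, ← integral_const_mul]
  refine integral_congr_ae (.of_forall fun s => ?_)
  simp only [reindex_arc_zero_apply, mul_assoc]
  refine congrArg₂ (· * ·) (congrArg f ?_) (congrArg₂ (· * ·) (congrArg g ?_) (congrArg u ?_))
  all_goals
    funext j
    have hj := j.2
    grind [pad]

theorem tensorL2_toLp (hd : m + n = d) (h : m + n - 2 * 0 = d) {f : (Fin m → ℝ) → ℂ}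
    {g : (Fin n → ℝ) → ℂ} (hf : MemLp f 2 (μpos m)) (hg : MemLp g 2 (μpos n)) :
    tensorL2 hd hf.toLp hg.toLp =
      (memLp_reindex_arc (add_zero m) (zero_add n) hd h hf hg).toLp :=
  arcL2_toLp _ _ _ h hf hg

theorem arcL2_tensorL2 (hmc : m + q = c) (hc : a + p = c) (hq : b + p = q) (hn : p + k = n)
    (had : a + k = d) (he : b + k = e) (hmd : m + e = d) (F : OrthantL2 m) (G : OrthantL2 q)
    (H : OrthantL2 n) :
    arcL2 hc hn had (tensorL2 hmc F G) H = tensorL2 hmd F (arcL2 hq hn he G H) := by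
  rw [← Lp.toLp_coeFn F (Lp.memLp F), ← Lp.toLp_coeFn G (Lp.memLp G),
    ← Lp.toLp_coeFn H (Lp.memLp H), tensorL2_toLp hmc hmc, arcL2_toLp _ _ _ (by omega),
    arcL2_toLp _ _ _ (by omega), tensorL2_toLp hmd hmd]
  simp only [reindex_arc_tensor hmc (show c + n - 2 * p = d by omega)
    (show q + n - 2 * p = e by omega) hmd (by omega) (by omega)]

theorem norm_tensorL2_le (hd : m + n = d) (F : OrthantL2 m) (G : OrthantL2 n) :
    ‖tensorL2 hd F G‖ ≤ ‖F‖ * ‖G‖ :=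
  norm_arcL2_le _ _ _ F G

instance instIsFiniteMeasureμposZero : IsFiniteMeasure (μpos 0) := by
  rw [μpos_zero]
  infer_instance

/-- The constant `1` of `L²(ℝ₊⁰) = ℂ`, the empty tensor product. -/
def unitL2 : OrthantL2 0 := MemLp.toLp (fun _ => 1) (memLp_const 1)

theorem norm_toLp_zero {φ : (Fin 0 → ℝ) → ℂ} (hφ : MemLp φ 2 (μpos 0)) :
    ‖hφ.toLp‖ = ‖φ fun _ => 0‖ := by
  obtain ⟨z, rfl⟩ : ∃ z, φ = fun _ => z :=
    ⟨φ fun _ => 0, funext fun t => congrArg φ (Subsingleton.elim t _)⟩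
  rw [Lp.norm_toLp, μpos_zero, eLpNorm_const _ two_ne_zero (NeZero.ne _)]
  simp

theorem exists_eq_smul_unitL2 (F : OrthantL2 0) : ∃ z : ℂ, F = z • unitL2 ∧ ‖z‖ = ‖F‖ := by
  refine ⟨F fun _ => 0, ?_, ?_⟩
  · rw [unitL2, ← MemLp.toLp_const_smul]
    refine (Lp.toLp_coeFn F (Lp.memLp F)).symm.trans (MemLp.toLp_congr _ _ (.of_forall fun t => ?_))
    rw [Pi.smul_apply, smul_eq_mul, mul_one]
    exact congrArg F (Subsingleton.elim t _)
  · rw [← norm_toLp_zero (Lp.memLp F), Lp.toLp_coeFn]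

theorem tensorL2_unitL2 (F : OrthantL2 m) : tensorL2 (add_zero m) F unitL2 = F := by
  rw [← Lp.toLp_coeFn F (Lp.memLp F), unitL2, tensorL2_toLp _ (add_zero m)]
  congr 1
  funext t
  refine (reindex_arc_zero_apply (add_zero m) F _ t).trans ((mul_one _).trans ?_)
  exact congrArg F (funext fun j => dif_pos j.2)

theorem unitL2_tensorL2 (F : OrthantL2 m) : tensorL2 (zero_add m) unitL2 F = F := by
  rw [← Lp.toLp_coeFn F (Lp.memLp F), unitL2, tensorL2_toLp _ (zero_add m)]
  congr 1
  funext t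
  refine (reindex_arc_zero_apply (zero_add m) _ F t).trans ((one_mul _).trans ?_)
  exact congrArg F (funext fun j => pad_of_val_eq t (by omega))

end Orthant

section Asymptotics

variable {α ι : Type*} {l : Filter α} {a b d h m n p q : ℕ}

theorem isBigO_one_arcL2 (hm : a + p = m) (hn : p + b = n) (hd : a + b = d)
    {F : α → OrthantL2 m} {G : α → OrthantL2 n} (hF : F =O[l] fun _ => (1 : ℝ))
    (hG : G =O[l] fun _ => (1 : ℝ)) :
    (fun x => arcL2 hm hn hd (F x) (G x)) =O[l] fun _ => (1 : ℝ) :=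
  (IsBigO.of_norm_le fun x => norm_arcL2_le hm hn hd (F x) (G x)).trans
    (by simpa using hF.norm_left.mul hG.norm_left)

theorem isLittleO_one_arcL2_left (hm : a + p = m) (hn : p + b = n) (hd : a + b = d)
    {F : α → OrthantL2 m} {G : α → OrthantL2 n} (hF : F =o[l] fun _ => (1 : ℝ))
    (hG : G =O[l] fun _ => (1 : ℝ)) :
    (fun x => arcL2 hm hn hd (F x) (G x)) =o[l] fun _ => (1 : ℝ) :=
  (IsBigO.of_norm_le fun x => norm_arcL2_le hm hn hd (F x) (G x)).trans_isLittleO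
    (by simpa using hF.norm_left.mul_isBigO hG.norm_left)

theorem isLittleO_one_tensorL2_right (hd : m + n = d) {F : α → OrthantL2 m}
    {G : α → OrthantL2 n} (hF : F =O[l] fun _ => (1 : ℝ)) (hG : G =o[l] fun _ => (1 : ℝ)) :
    (fun x => tensorL2 hd (F x) (G x)) =o[l] fun _ => (1 : ℝ) :=
  (IsBigO.of_norm_le fun x => norm_tensorL2_le hd (F x) (G x)).trans_isLittleO
    (by simpa using hF.norm_left.mul_isLittleO hG.norm_left)

theorem isLittleO_one_smul {E : Type*} [SeminormedAddCommGroup E] [NormedSpace ℂ E] {c : α → ℂ}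
    {F : α → E} (hc : c =O[l] fun _ => (1 : ℝ)) (hF : F =o[l] fun _ => (1 : ℝ)) :
    (fun x => c x • F x) =o[l] fun _ => (1 : ℝ) := by
  simpa using hc.smul_isLittleO hF

/-- A bounded family in `L²(ℝ₊^q)`, `q = 2h`, whose contractions of order `1, …, q - 1` are
asymptotically negligible, except that each member is asymptotically idempotent for the contraction
of order `h`. -/
structure IsAsympIdempotent (hq : h + h = q) (l : Filter α) (f : ι → α → OrthantL2 q) :
    Prop where
  isBigO_one : ∀ i, f i =O[l] fun _ => (1 : ℝ)
  arcL2_half : ∀ i, (fun x => arcL2 hq hq hq (f i x) (f i x) - f i x) =o[l] fun _ => (1 : ℝ)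
  arcL2_vanish : ∀ i j {b p d : ℕ} (hbp : b + p = q) (hpb : p + b = q) (hd : b + b = d),
    0 < p → p < q → i ≠ j ∨ p ≠ h →
    (fun x => arcL2 hbp hpb hd (f i x) (f j x)) =o[l] fun _ => (1 : ℝ)

/-- The families of tensor products `x ↦ f i₁ x ⊗ ⋯ ⊗ f iₖ x`, the empty product being `1`. -/
inductive IsPureTensor (f : ι → α → OrthantL2 q) : (d : ℕ) → (α → OrthantL2 d) → Prop
  | unit : IsPureTensor f 0 fun _ => unitL2
  | tensor {m d : ℕ} (hd : m + q = d) {P : α → OrthantL2 m} (hP : IsPureTensor f m P) (i : ι) :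
      IsPureTensor f d fun x => tensorL2 hd (P x) (f i x)

theorem IsPureTensor.isBigO_one {f : ι → α → OrthantL2 q} (hf : ∀ i, f i =O[l] fun _ => (1 : ℝ))
    {P : α → OrthantL2 d} (hP : IsPureTensor f d P) : P =O[l] fun _ => (1 : ℝ) := by
  induction hP with
  | unit => exact isBigO_const_const _ one_ne_zero _
  | tensor hd _ i ih => exact isBigO_one_arcL2 _ _ _ ih (hf i)

/-- `F` is a bounded multiple of a pure tensor of the family `f`, up to an error `o(1)`. -/
def IsAsympTensor (f : ι → α → OrthantL2 q) (l : Filter α) (d : ℕ) (F : α → OrthantL2 d) : Prop :=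
  ∃ P c, IsPureTensor f d P ∧ c =O[l] (fun _ => (1 : ℝ)) ∧
    (fun x => F x - (c x : ℂ) • P x) =o[l] fun _ => (1 : ℝ)

namespace IsAsympTensor

variable {f : ι → α → OrthantL2 q}

theorem of_isPureTensor {P : α → OrthantL2 d} (hP : IsPureTensor f d P) :
    IsAsympTensor f l d P :=
  ⟨P, fun _ => 1, hP, isBigO_const_const _ one_ne_zero _,
    by simpa using tendsto_const_nhds⟩

theorem self (i : ι) : IsAsympTensor f l q (f i) := by
  simpa only [unitL2_tensorL2] using of_isPureTensor (l := l) (.tensor (zero_add q) .unit i)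

theorem tensor (hf : ∀ i, f i =O[l] fun _ => (1 : ℝ)) {F : α → OrthantL2 m}
    (hF : IsAsympTensor f l m F) (hd : m + q = d) (j : ι) :
    IsAsympTensor f l d fun x => tensorL2 hd (F x) (f j x) := by
  obtain ⟨P, c, hP, hc, hFP⟩ := hF
  refine ⟨_, c, .tensor hd hP j, hc, ?_⟩
  have herror := isLittleO_one_arcL2_left (add_zero m) (zero_add q) hd hFP (hf j)
  simpa only [tensorL2, map_sub, map_smul, LinearMap.sub_apply, LinearMap.smul_apply]
    using herror

/-- Contractions of positive order involve only the last tensor factor. -/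
theorem exists_sub_arcL2_isLittleO (hf : ∀ i, f i =O[l] fun _ => (1 : ℝ)) {F : α → OrthantL2 m}
    (hF : IsAsympTensor f l m F) (hm : a + p = m) (hp : 0 < p) (hbp : b + p = q)
    (hpb : p + b = q) (hd : a + b = d) (j : ι) :
    ∃ (k e : ℕ) (hk : k + e = d) (he : b + b = e) (P : α → OrthantL2 k) (c : α → ℂ) (i : ι),
      IsPureTensor f k P ∧ c =O[l] (fun _ => (1 : ℝ)) ∧
      (fun x => arcL2 hm hpb hd (F x) (f j x) -
        c x • tensorL2 hk (P x) (arcL2 hbp hpb he (f i x) (f j x))) =o[l]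
          fun _ => (1 : ℝ) := by
  obtain ⟨_, c, hP, hc, hFP⟩ := hF
  cases hP with
  | unit => omega
  | tensor hkq hP i =>
    refine ⟨_, _, by omega, rfl, _, c, i, hP, hc, ?_⟩
    have herror := isLittleO_one_arcL2_left hm hpb hd hFP (hf j)
    simpa only [map_sub, map_smul, LinearMap.sub_apply, LinearMap.smul_apply,
      arcL2_tensorL2 hkq hm hbp hpb hd rfl (show _ = d by omega)] using herror

theorem arcL2_of_pos_of_lt {hq : h + h = q} (hf : IsAsympIdempotent hq l f)
    {F : α → OrthantL2 m} (hF : IsAsympTensor f l m F) (hm : a + p = m) (hpb : p + b = q)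
    (hd : a + b = d) (hp : 0 < p) (hpq : p < q) (j : ι) :
    (IsAsympTensor f l d (fun x => arcL2 hm hpb hd (F x) (f j x)) ∧ p = h) ∨
      (fun x => arcL2 hm hpb hd (F x) (f j x)) =o[l] fun _ => (1 : ℝ) := by
  have hbp : b + p = q := by omega
  obtain ⟨k, e, hk, he, P, c, i, hP, hc, hlast⟩ :=
    hF.exists_sub_arcL2_isLittleO hf.isBigO_one hm hp hbp hpb hd j
  have hPO := hP.isBigO_one hf.isBigO_one
  by_cases hij : i ≠ j ∨ p ≠ h
  · have hvanish := isLittleO_one_smul hc (isLittleO_one_tensorL2_right hk hPO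
      (hf.arcL2_vanish i j hbp hpb he hp hpq hij))
    exact .inr (by simpa only [sub_add_cancel] using hlast.add hvanish)
  · obtain ⟨rfl, rfl⟩ : i = j ∧ p = h := by simpa using hij
    obtain rfl : b = p := by omega
    obtain rfl : e = q := by omega
    have hhalf := isLittleO_one_smul hc (isLittleO_one_tensorL2_right hk hPO (hf.arcL2_half i))
    refine .inl ⟨⟨_, c, .tensor hk hP i, hc, ?_⟩, rfl⟩
    simpa only [map_sub, smul_sub, sub_add_sub_cancel] using hlast.add hhalf

theorem arcL2_full (hf : ∀ i, f i =O[l] fun _ => (1 : ℝ)) {F : α → OrthantL2 m}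
    (hF : IsAsympTensor f l m F) (hm : a + q = m) (hq : 0 < q) (j : ι) :
    IsAsympTensor f l a fun x => arcL2 hm (add_zero q) (add_zero a) (F x) (f j x) := by
  obtain ⟨k, e, hk, he, P, c, i, hP, hc, hlast⟩ :=
    hF.exists_sub_arcL2_isLittleO hf hm hq (zero_add q) (add_zero q) (add_zero a) j
  obtain rfl : e = 0 := by omega
  obtain rfl : k = a := hk
  choose z hz hnorm using fun x =>
    exists_eq_smul_unitL2 (arcL2 (zero_add q) (add_zero q) he (f i x) (f j x))
  have hzO : z =O[l] fun _ => (1 : ℝ) :=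
    (IsBigO.of_norm_le fun x => (hnorm x).le).trans (isBigO_one_arcL2 _ _ _ (hf i) (hf j)).norm_left
  refine ⟨P, fun x => c x * z x, hP, by simpa using hc.mul hzO, ?_⟩
  simpa only [hz, map_smul, tensorL2_unitL2, smul_smul] using hlast

theorem arcL2_dichotomy {hq : h + h = q} (hf : IsAsympIdempotent hq l f) {F : α → OrthantL2 m}
    (hF : IsAsympTensor f l m F) (hm : a + p = m) (hpb : p + b = q) (hd : a + b = d) (j : ι) :
    (IsAsympTensor f l d (fun x => arcL2 hm hpb hd (F x) (f j x)) ∧ (p = 0 ∨ p = h ∨ p = q)) ∨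
      (fun x => arcL2 hm hpb hd (F x) (f j x)) =o[l] fun _ => (1 : ℝ) := by
  rcases p.eq_zero_or_pos with rfl | hp
  · obtain rfl : b = q := by omega
    obtain rfl : a = m := hm
    exact .inl ⟨hF.tensor hf.isBigO_one hd j, .inl rfl⟩
  rcases (show p ≤ q by omega).eq_or_lt with rfl | hpq
  · obtain rfl : b = 0 := by omega
    obtain rfl : a = d := hd
    exact .inl ⟨hF.arcL2_full hf.isBigO_one hm hp j, .inr (.inr rfl)⟩
  · exact (hF.arcL2_of_pos_of_lt hf hm hpb hd hp hpq j).imp_left (.imp_right (.inr <| .inl ·))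

end IsAsympTensor

end Asymptotics

section Iteration

variable {α ι : Type*} {l : Filter α} {a b d k m p q : ℕ}

theorem L2norm_eq_norm_toLp {φ : (Fin d → ℝ) → ℂ} (hφ : MemLp φ 2 (μpos d)) :
    L2norm d φ = ‖hφ.toLp‖ := by
  rw [Lp.norm_toLp, hφ.eLpNorm_eq_integral_rpow_norm two_ne_zero ENNReal.ofNat_ne_top, L2norm,
    Real.sqrt_eq_rpow]
  rw [ENNReal.toReal_ofReal (Real.rpow_nonneg (integral_nonneg fun x => by positivity) _)]
  simp

theorem L2norm_eq_sqrt_norm_L2inner (d : ℕ) (φ : (Fin d → ℝ) → ℂ) :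
    L2norm d φ = √‖L2inner d φ φ‖ := by
  have hinner : L2inner d φ φ = ((∫ x, ‖φ x‖ ^ 2 ∂μpos d : ℝ) : ℂ) := by
    rw [L2inner, ← integral_complex_ofReal]
    simp only [Complex.mul_conj, Complex.normSq_eq_norm_sq]
  rw [hinner, L2norm, Complex.norm_of_nonneg (integral_nonneg fun x => sq_nonneg _)]

theorem isBoundedUnder_L2norm_of_tendsto_L2inner {φ : α → (Fin d → ℝ) → ℂ} {c : ℂ}
    (h : Tendsto (fun x => L2inner d (φ x) (φ x)) l (𝓝 c)) :
    l.IsBoundedUnder (· ≤ ·) fun x => L2norm d (φ x) := by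
  simp only [L2norm_eq_sqrt_norm_L2inner]
  exact h.norm.sqrt.isBoundedUnder_le

theorem isLittleO_one_toLp_iff {φ : α → (Fin d → ℝ) → ℂ} (hφ : ∀ x, MemLp (φ x) 2 (μpos d)) :
    (fun x => (hφ x).toLp) =o[l] (fun _ => (1 : ℝ)) ↔
      Tendsto (fun x => L2norm d (φ x)) l (𝓝 0) := by
  rw [isLittleO_one_iff, tendsto_zero_iff_norm_tendsto_zero]
  simp only [L2norm_eq_norm_toLp (hφ _)]

theorem isAsympIdempotent_toLp (hq : q / 2 + q / 2 = q) {f : α → ι → (Fin q → ℝ) → ℂ}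
    (hmem : ∀ x i, MemLp (f x i) 2 (μpos q))
    (hbdd : ∀ i, l.IsBoundedUnder (· ≤ ·) fun x => L2norm q (f x i))
    (hhalf : ∀ i, Tendsto (fun x => L2norm q fun t =>
      reindex (show q + q - 2 * (q / 2) = q by omega) (arc q q (q / 2) (f x i) (f x i)) t -
        f x i t) l (𝓝 0))
    (hvanish : ∀ i j p, 1 ≤ p → p ≤ q - 1 → i ≠ j ∨ p ≠ q / 2 →
      Tendsto (fun x => L2norm (q + q - 2 * p) (arc q q p (f x i) (f x j))) l (𝓝 0)) :
    IsAsympIdempotent hq l fun i x => (hmem x i).toLp where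
  isBigO_one i := by
    rw [isBigO_one_iff]
    simpa only [L2norm_eq_norm_toLp (hmem _ i)] using hbdd i
  arcL2_half i := by
    have hmem_arc := fun x =>
      memLp_reindex_arc hq hq hq (by omega) (hmem x i) (hmem x i)
    simp only [arcL2_toLp hq hq hq (show q + q - 2 * (q / 2) = q by omega), ← MemLp.toLp_sub]
    exact (isLittleO_one_toLp_iff fun x => (hmem_arc x).sub (hmem x i)).2 (hhalf i)
  arcL2_vanish i j b p d hbp hpb hd hp hpq hij := by
    obtain rfl : q + q - 2 * p = d := by omega
    simp only [arcL2_toLp hbp hpb hd rfl]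
    exact (isLittleO_one_toLp_iff _).2 (hvanish i j p hp (by omega) hij)

/-- The function `x.2` of `x.1` variables, as produced by `iterArc`, is square-integrable with
class `F` in `L²(ℝ₊ᵈ)`; in particular `x.1 = d`. -/
def Represents (x : (d : ℕ) × ((Fin d → ℝ) → ℂ)) (F : OrthantL2 d) : Prop :=
  ∃ (φ : (Fin d → ℝ) → ℂ) (hφ : MemLp φ 2 (μpos d)), x = ⟨d, φ⟩ ∧ F = hφ.toLp

theorem Represents.iterStep {x : (d : ℕ) × ((Fin d → ℝ) → ℂ)} {F : OrthantL2 m}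
    (hx : Represents x F) {g : (Fin q → ℝ) → ℂ} (hg : MemLp g 2 (μpos q)) (hm : a + p = m)
    (hpb : p + b = q) (hd : a + b = d) :
    Represents (iterStep q x (p, g)) (arcL2 hm hpb hd F hg.toLp) := by
  obtain ⟨φ, hφ, rfl, rfl⟩ := hx
  obtain rfl : m + q - 2 * p = d := by omega
  exact ⟨_, _, rfl, arcL2_toLp hm hpb hd rfl hφ hg⟩

theorem Represents.norm_scalarOf {x : (d : ℕ) × ((Fin d → ℝ) → ℂ)} {F : OrthantL2 0}
    (hx : Represents x F) : ‖scalarOf x‖ = ‖F‖ := by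
  obtain ⟨φ, hφ, rfl, rfl⟩ := hx
  exact (norm_toLp_zero hφ).symm

theorem iterArc_range_succ (f₀ : (Fin q → ℝ) → ℂ) (u : ℕ → ℕ × ((Fin q → ℝ) → ℂ)) (k : ℕ) :
    iterArc q f₀ ((List.range (k + 1)).map u) =
      iterStep q (iterArc q f₀ ((List.range k).map u)) (u k) := by
  simp only [iterArc, List.range_succ, List.map_append, List.map_singleton, List.foldl_append,
    List.foldl_cons, List.foldl_nil]

theorem memA.add_two_mul_sum_le {r : ℕ → ℕ} (hr : memA q m r) (hk : k + 1 ≤ m - 1) :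
    r (k + 1) + 2 * ∑ p ∈ Finset.Icc 1 k, r p ≤ (k + 1) * q := by
  rcases k.eq_zero_or_pos with rfl | hk0
  · simpa using hr.1 1 le_rfl hk
  · simpa using hr.2 (k + 1) (by omega) hk

theorem exists_represents_iterArc {h : ℕ} {hq : h + h = q} {f : α → ι → (Fin q → ℝ) → ℂ}
    {hmem : ∀ x i, MemLp (f x i) 2 (μpos q)}
    (hf : IsAsympIdempotent hq l fun i x => (hmem x i).toLp) {r : ℕ → ℕ} (hr : memA q m r)
    (χ : ℕ → ι) (hk : k ≤ m - 1) :
    ∃ (d : ℕ) (F : α → OrthantL2 d),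
      (∀ x, Represents (iterArc q (f x (χ 1))
        ((List.range k).map fun j => (r (j + 1), f x (χ (j + 2))))) (F x)) ∧
      d + 2 * ∑ p ∈ Finset.Icc 1 k, r p = (k + 1) * q ∧
      ((IsAsympTensor (fun i x => (hmem x i).toLp) l d F ∧
          ∀ p, 1 ≤ p → p ≤ k → r p = 0 ∨ r p = h ∨ r p = q) ∨
        F =o[l] fun _ => (1 : ℝ)) := by
  induction k with
  | zero =>
    exact ⟨q, fun x => (hmem x (χ 1)).toLp, fun x => ⟨_, hmem x (χ 1), rfl, rfl⟩, by simp,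
      .inl ⟨.self (f := fun i x => (hmem x i).toLp) (χ 1), by omega⟩⟩
  | succ k ih =>
    obtain ⟨m', F, hrep, hdim, hF⟩ := ih (by omega)
    have hr_le := hr.add_two_mul_sum_le hk
    obtain ⟨a, ha⟩ : ∃ a, a + r (k + 1) = m' := ⟨m' - r (k + 1), by omega⟩
    obtain ⟨b, hb⟩ := Nat.exists_eq_add_of_le (hr.1 (k + 1) (by omega) hk)
    refine ⟨a + b, fun x => arcL2 ha hb.symm rfl (F x) (hmem x (χ (k + 2))).toLp, fun x => ?_, ?_,
      ?_⟩
    · rw [iterArc_range_succ]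
      exact (hrep x).iterStep (hmem x (χ (k + 2))) ha hb.symm rfl
    · rw [Finset.sum_Icc_succ_top (by omega), add_mul, one_mul, ← hdim]
      omega
    · rcases hF with ⟨htensor, hmemD⟩ | hsmall
      · refine (htensor.arcL2_dichotomy hf ha hb.symm rfl (χ (k + 2))).imp_left (.imp_right ?_)
        intro hlast p hp hpk
        rcases hpk.eq_or_lt with rfl | hpk
        · exact hlast
        · exact hmemD p hp (by omega)
      · exact .inr (isLittleO_one_arcL2_left ha hb.symm rfl hsmall
          (hf.isBigO_one (χ (k + 2))))

end Iteration

theorem iterated_contraction_Em_tendsto_zero_general {α ι : Type*} {l : Filter α} (q : ℕ)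
    (hqe : q % 2 = 0) (f : α → ι → (Fin q → ℝ) → ℂ)
    (hmem : ∀ x i, MemLp (f x i) 2 (μpos q))
    (hbdd : ∀ i, l.IsBoundedUnder (· ≤ ·) fun x => L2norm q (f x i))
    (hdiag : ∀ i, Tendsto (fun x => L2norm q fun t =>
      reindex (show q + q - 2 * (q / 2) = q by omega) (arc q q (q / 2) (f x i) (f x i)) t -
        f x i t) l (𝓝 0))
    (hdiag' : ∀ i r, 1 ≤ r → r ≤ q - 1 → r ≠ q / 2 →
      Tendsto (fun x => L2norm (q + q - 2 * r) (arc q q r (f x i) (f x i))) l (𝓝 0))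
    (hoff : ∀ i j, i ≠ j → ∀ r, 1 ≤ r → r ≤ q - 1 →
      Tendsto (fun x => L2norm (q + q - 2 * r) (arc q q r (f x i) (f x j))) l (𝓝 0))
    (m : ℕ) (χ : ℕ → ι) (r : ℕ → ℕ) (hr : memE q m r) :
    Tendsto (fun x => scalarOf (iterArc q (f x (χ 1))
      ((List.range (m - 1)).map fun k => (r (k + 1), f x (χ (k + 2)))))) l (𝓝 0) := by
  have hidem := isAsympIdempotent_toLp (by omega) hmem hbdd hdiag fun i j p hp hpq hij => by
    rcases eq_or_ne i j with rfl | hne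
    · exact hdiag' i p hp hpq (by simpa using hij)
    · exact hoff i j hne p hp hpq
  obtain ⟨hB, hD⟩ := hr
  obtain ⟨d, F, hrep, hdim, hF⟩ := exists_represents_iterArc hidem hB.1 χ le_rfl
  have hsmall := hF.resolve_left fun htensor => hD ⟨hB, htensor.2⟩
  have hm : 1 ≤ m := by
    by_contra! hm
    exact hD ⟨hB, by omega⟩
  obtain rfl : d = 0 := by
    rw [hB.2, Nat.sub_add_cancel hm] at hdim
    omega
  rw [tendsto_zero_iff_norm_tendsto_zero]
  simp only [(hrep _).norm_scalarOf]
  exact tendsto_zero_iff_norm_tendsto_zero.1 ((isLittleO_one_iff ℝ).1 hsmall)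

/-- for tuples in `E_m = B_m \ D_m`, the scalar iterated contraction tends to `0`. -/
theorem iterated_contraction_Em_tendsto_zero (q : ℕ) (hq2 : 2 ≤ q) (hqe : q % 2 = 0)
    (lam : ℕ → ℝ) (hlam : ∀ i, 0 < lam i)
    (f : ℕ → ℕ → (Fin q → ℝ) → ℂ)
    (hmem : ∀ n i, MeasureTheory.MemLp (f n i) 2 (μpos q))
    (hsym : ∀ n i, IsSymmFn q (f n i))
    (hinner : ∀ i j, Filter.Tendsto (fun n => L2inner q (f n i) (f n j)) Filter.atTop
      (nhds (if i = j then (lam i : ℂ) else 0)))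
    (hdiag : ∀ i, Filter.Tendsto (fun n => L2norm q (fun t =>
        reindex (show q + q - 2 * (q / 2) = q by omega)
          (arc q q (q / 2) (f n i) (f n i)) t - f n i t)) Filter.atTop (nhds 0))
    (hdiag' : ∀ i r, 1 ≤ r → r ≤ q - 1 → r ≠ q / 2 →
      Filter.Tendsto (fun n => L2norm (q + q - 2 * r) (arc q q r (f n i) (f n i)))
        Filter.atTop (nhds 0))
    (hoff : ∀ i j, i ≠ j → ∀ r, 1 ≤ r → r ≤ q - 1 →
      Filter.Tendsto (fun n => L2norm (q + q - 2 * r) (arc q q r (f n i) (f n j)))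
        Filter.atTop (nhds 0))
    (m : ℕ) (hm : 2 ≤ m) (χ : ℕ → ℕ) (r : ℕ → ℕ) (hr : memE q m r) :
    Filter.Tendsto (fun n => scalarOf (iterArc q (f n (χ 1))
        ((List.range (m - 1)).map fun k => (r (k + 1), f n (χ (k + 2))))))
      Filter.atTop (nhds 0) := by
  exact iterated_contraction_Em_tendsto_zero_general q hqe f hmem
    (fun i => isBoundedUnder_L2norm_of_tendsto_L2inner (hinner i i)) hdiag hdiag' hoff m χ r hr

end
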